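/- The generating function V_3(x) for vicious 3-watermelons, as a formal power series with V_3(0) = 1, satisfies the linear differential equation x^2(1+x)(1-8x) V_3'' + x(8 - 42x - 32x^2) V_3' + (12 - 40x - 16x^2) V_3 = 12. -/

import Mathlib

/-- A directed walk of length `n`, encoded by its ordinates, frozen after time `n`. -/
def IsWalkTo (n : ℕ) (y : ℕ → ℤ) : Prop :=
  (∀ t < n, y (t + 1) = y t + 1 ∨ y (t + 1) = y t - 1) ∧ (∀ t, n ≤ t → y t = y n)

/-- A vicious `p`-watermelon of length `n`: walks start at heights `0,2,…,2(p-1)`,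
end at heights `c, c+2, …, c+2(p-1)` for some `c`, with strict ordering at every time. -/
def Vicious (p n : ℕ) (y : Fin p → ℕ → ℤ) : Prop :=
  (∀ k, IsWalkTo n (y k)) ∧
  (∀ k : Fin p, y k 0 = 2 * ((k : ℕ) : ℤ)) ∧
  (∃ c : ℤ, ∀ k : Fin p, y k n = c + 2 * ((k : ℕ) : ℤ)) ∧
  (∀ t ≤ n, ∀ j k : Fin p, j < k → y j t < y k t)

/-- A super friendly `p`-watermelon of length `n`: all walks start at the origin,
all end at the same point, with weak ordering at every time. -/
def SuperFriendly (p n : ℕ) (y : Fin p → ℕ → ℤ) : Prop :=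
  (∀ k, IsWalkTo n (y k)) ∧
  (∀ k, y k 0 = 0) ∧
  (∀ j k : Fin p, y j n = y k n) ∧
  (∀ t ≤ n, ∀ j k : Fin p, j ≤ k → y j t ≤ y k t)

open PowerSeries

/-- The number of walks of length `n` with total displacement `d`. -/
def walkCount : ℕ → ℤ → ℤ
  | 0, d => if d = 0 then 1 else 0
  | n + 1, d => ∑ s ∈ ({1, -1} : Finset ℤ), walkCount n (d - s)

theorem walkCount_succ (n : ℕ) (d : ℤ) :
    walkCount (n + 1) d = walkCount n (d - 1) + walkCount n (d + 1) := by
  simp [walkCount]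

theorem walkCount_add_two (n : ℕ) (d : ℤ) :
    (n + d + 2) * walkCount n (d + 2) = (n - d) * walkCount n d := by
  induction n generalizing d with
  | zero =>
    simp only [walkCount]
    split_ifs <;> push_cast <;> linarith
  | succ n ih =>
    have h₁ := ih (d + 1)
    have h₂ := ih (d - 1)
    rw [walkCount_succ, walkCount_succ, show d + 2 - 1 = d + 1 by ring]
    rw [show d - 1 + 2 = d + 1 by ring] at h₂
    rw [show d + 1 + 2 = d + 2 + 1 by ring] at h₁
    push_cast
    linear_combination h₁ + h₂

theorem walkCount_neg_self (n : ℕ) : walkCount n (-n) = 1 := by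
  induction n with
  | zero => simp [walkCount]
  | succ n ih =>
    have h := walkCount_add_two n (-n - 2)
    rw [show (n : ℤ) + (-n - 2) + 2 = 0 by ring, zero_mul, eq_comm, mul_eq_zero] at h
    have h₀ : walkCount n (-n - 2) = 0 := h.resolve_left (by omega)
    rw [walkCount_succ, show -((n + 1 : ℕ) : ℤ) - 1 = -n - 2 by push_cast; ring,
      show -((n + 1 : ℕ) : ℤ) + 1 = -n by push_cast; ring, h₀, ih, zero_add]

theorem choose_succ_mul_cast (n k : ℕ) :
    (n.choose (k + 1) : ℚ) * (k + 1) = n.choose k * (n - k) := by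
  rcases le_or_gt k n with h | h
  · have := Nat.choose_succ_right_eq n k
    rw [← Nat.cast_sub h]
    exact_mod_cast this
  · simp [Nat.choose_eq_zero_of_lt h, Nat.choose_eq_zero_of_lt (h.trans k.lt_succ_self)]

theorem succ_choose_mul_cast (n k : ℕ) :
    ((n + 1).choose k : ℚ) * (n + 1 - k) = n.choose k * (n + 1) := by
  rcases le_or_gt k (n + 1) with h | h
  · have := Nat.choose_mul_succ_eq n k
    rw [show (n : ℚ) + 1 - k = ((n + 1 - k : ℕ) : ℚ) by push_cast [Nat.cast_sub h]; ring]
    exact_mod_cast this.symm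
  · simp [Nat.choose_eq_zero_of_lt h, Nat.choose_eq_zero_of_lt (n.lt_succ_self.trans h)]

theorem walkCount_eq_choose (n k : ℕ) : walkCount n (2 * k - n) = n.choose k := by
  induction k with
  | zero => simpa using walkCount_neg_self n
  | succ k ih =>
    have h := walkCount_add_two n (2 * k - n)
    have h' := choose_succ_mul_cast n k
    rw [ih] at h
    rw [show 2 * ((k + 1 : ℕ) : ℤ) - n = 2 * k - n + 2 by push_cast; ring]
    have hk : (k + 1 : ℚ) ≠ 0 := by positivity
    have h'' : ((walkCount n (2 * k - n + 2) : ℤ) : ℚ) = ((n.choose (k + 1) : ℤ) : ℚ) := by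
      apply mul_right_cancel₀ hk
      have hq := congrArg (Int.cast : ℤ → ℚ) h
      push_cast at hq ⊢
      linear_combination hq / 2 - h'
    exact_mod_cast h''

/-- Families of vicious walkers of length `n` with prescribed end heights `e`. -/
def ViciousTo (p n : ℕ) (e : Fin p → ℤ) (y : Fin p → ℕ → ℤ) : Prop :=
  (∀ k, IsWalkTo n (y k)) ∧ (∀ k : Fin p, y k 0 = 2 * ((k : ℕ) : ℤ)) ∧
  (∀ k, y k n = e k) ∧ (∀ t ≤ n, ∀ j k : Fin p, j < k → y j t < y k t)

/-- Replace the values of `y` after time `n` by the constants `e`. -/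
def extendWalks {p : ℕ} (n : ℕ) (e : Fin p → ℤ) (y : Fin p → ℕ → ℤ) : Fin p → ℕ → ℤ :=
  fun k t => if t ≤ n then y k t else e k

open Classical in
/-- The finite set of families of vicious walkers with prescribed end heights, built by
appending one step at a time. -/
noncomputable def viciousFinset (p : ℕ) : ℕ → (Fin p → ℤ) → Finset (Fin p → ℕ → ℤ)
  | 0, e => if e = (fun k : Fin p => 2 * ((k : ℕ) : ℤ)) then {fun k _ => e k} else ∅
  | n + 1, e =>
    if StrictMono e then
      (Fintype.piFinset fun _ : Fin p => ({1, -1} : Finset ℤ)).biUnion fun s =>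
        (viciousFinset p n (e - s)).image (extendWalks n e)
    else ∅

theorem ViciousTo.strictMono {p n : ℕ} {e : Fin p → ℤ} {y : Fin p → ℕ → ℤ}
    (h : ViciousTo p n e y) : StrictMono e := fun j k hjk => by
  rw [← h.2.2.1 j, ← h.2.2.1 k]
  exact h.2.2.2 n le_rfl j k hjk

theorem ViciousTo.extendWalks {p n : ℕ} {e s : Fin p → ℤ} {y : Fin p → ℕ → ℤ}
    (he : StrictMono e) (hs : ∀ k, s k = 1 ∨ s k = -1) (h : ViciousTo p n (e - s) y) :
    ViciousTo p (n + 1) e (extendWalks n e y) := by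
  obtain ⟨hw, h0, hn, ho⟩ := h
  refine ⟨fun k => ⟨fun t ht => ?_, fun t ht => ?_⟩, fun k => ?_, fun k => ?_,
    fun t ht j k hjk => ?_⟩
  · rcases (Nat.lt_succ_iff.1 ht).lt_or_eq with ht | rfl
    · simpa [_root_.extendWalks, ht, ht.le, Nat.succ_le_of_lt ht] using (hw k).1 t ht
    · have := hn k
      have := hs k
      simp only [_root_.extendWalks, Pi.sub_apply] at *
      simp only [le_refl, if_true, Nat.not_succ_le_self, if_false]
      omega
  · simp [_root_.extendWalks, show ¬ t ≤ n by omega]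
  · simp [_root_.extendWalks, h0]
  · simp [_root_.extendWalks]
  · simp only [_root_.extendWalks]
    split_ifs with h
    · exact ho t h j k hjk
    · exact he hjk

theorem ViciousTo.exists_eq_extendWalks {p n : ℕ} {e : Fin p → ℤ} {y : Fin p → ℕ → ℤ}
    (h : ViciousTo p (n + 1) e y) :
    ∃ s : Fin p → ℤ, (∀ k, s k = 1 ∨ s k = -1) ∧
      ∃ z, ViciousTo p n (e - s) z ∧ _root_.extendWalks n e z = y := by
  obtain ⟨hw, h0, hn, ho⟩ := h
  refine ⟨fun k => e k - y k n, fun k => ?_, fun k t => y k (min t n),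
    ⟨fun k => ⟨fun t ht => ?_, fun t ht => ?_⟩, fun k => ?_, fun k => ?_,
      fun t ht j k hjk => ?_⟩, ?_⟩
  · have := (hw k).1 n n.lt_succ_self
    have := hn k
    dsimp only
    omega
  · simpa [ht.le, Nat.succ_le_of_lt ht] using (hw k).1 t (ht.trans n.lt_succ_self)
  · simp [ht]
  · simp [h0]
  · simp
  · simpa [ht] using ho t (ht.trans n.le_succ) j k hjk
  · funext k t
    simp only [_root_.extendWalks]
    split_ifs with h
    · simp [h]
    · rw [(hw k).2 t (by omega), hn]

theorem mem_viciousFinset {p n : ℕ} {e : Fin p → ℤ} {y : Fin p → ℕ → ℤ} :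
    y ∈ viciousFinset p n e ↔ ViciousTo p n e y := by
  induction n generalizing e y with
  | zero =>
    simp only [viciousFinset]
    constructor
    · intro h
      split_ifs at h with he
      · subst he
        rw [Finset.mem_singleton] at h
        subst h
        refine ⟨fun k => ⟨by simp, by simp⟩, by simp, by simp, fun t _ j k hjk => ?_⟩
        have : (j : ℕ) < k := hjk
        dsimp only
        omega
      · simp at h
    · rintro ⟨hw, h0, hn, -⟩
      have he : e = fun k : Fin p => 2 * ((k : ℕ) : ℤ) := funext fun k => by rw [← hn, h0]
      rw [if_pos he, Finset.mem_singleton]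
      funext k t
      rw [(hw k).2 t t.zero_le, hn]
  | succ n ih =>
    simp only [viciousFinset]
    constructor
    · intro h
      split_ifs at h with he
      · simp only [Finset.mem_biUnion, Fintype.mem_piFinset, Finset.mem_insert,
          Finset.mem_singleton, Finset.mem_image] at h
        obtain ⟨s, hs, z, hz, rfl⟩ := h
        exact (ih.1 hz).extendWalks he hs
      · simp at h
    · intro h
      rw [if_pos h.strictMono]
      simp only [Finset.mem_biUnion, Fintype.mem_piFinset, Finset.mem_insert,
        Finset.mem_singleton, Finset.mem_image]
      obtain ⟨s, hs, z, hz, rfl⟩ := h.exists_eq_extendWalks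
      exact ⟨s, hs, z, ih.2 hz, rfl⟩

theorem viciousFinset_eq_empty {p n : ℕ} {e : Fin p → ℤ} (he : ¬ StrictMono e) :
    viciousFinset p n e = ∅ :=
  Finset.eq_empty_of_forall_notMem fun _ hy => he (mem_viciousFinset.1 hy).strictMono

theorem extendWalks_injOn {p : ℕ} (n : ℕ) (e e' : Fin p → ℤ) :
    Set.InjOn (extendWalks n e) {y | ViciousTo p n e' y} := by
  intro y hy z hz h
  funext k t
  have key : ∀ t ≤ n, y k t = z k t := fun t ht => by
    simpa [extendWalks, ht] using congrFun (congrFun h k) t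
  rcases le_total t n with ht | ht
  · exact key t ht
  · rw [(hy.1 k).2 t ht, (hz.1 k).2 t ht, key n le_rfl]

theorem card_viciousFinset_succ {p n : ℕ} {e : Fin p → ℤ} (he : StrictMono e) :
    (viciousFinset p (n + 1) e).card =
      ∑ s ∈ Fintype.piFinset fun _ : Fin p => ({1, -1} : Finset ℤ),
        (viciousFinset p n (e - s)).card := by
  classical
  rw [viciousFinset, if_pos he, Finset.card_biUnion]
  · refine Finset.sum_congr rfl fun s _ => Finset.card_image_of_injOn fun y hy z hz h => ?_
    exact extendWalks_injOn n e (e - s) (mem_viciousFinset.1 hy) (mem_viciousFinset.1 hz) h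
  · intro s _ s' _ hne
    rw [Function.onFun, Finset.disjoint_left]
    intro y hy hy'
    obtain ⟨z, hz, rfl⟩ := Finset.mem_image.1 hy
    obtain ⟨z', hz', h⟩ := Finset.mem_image.1 hy'
    refine hne (funext fun k => ?_)
    have h₁ := (mem_viciousFinset.1 hz).2.2.1 k
    have h₂ := (mem_viciousFinset.1 hz').2.2.1 k
    have h₃ : z' k n = z k n := by
      simpa [extendWalks] using congrFun (congrFun h k) n
    simp only [Pi.sub_apply] at h₁ h₂
    omega

theorem det_walkCount_zero {p : ℕ} {e : Fin p → ℤ} (he : StrictMono e) :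
    (Matrix.of fun k j : Fin p => walkCount 0 (e k - 2 * ((j : ℕ) : ℤ))).det =
      if e = (fun k : Fin p => 2 * ((k : ℕ) : ℤ)) then 1 else 0 := by
  split_ifs with h
  · subst h
    convert Matrix.det_one (n := Fin p) (R := ℤ)
    ext k j
    simp [walkCount, Matrix.one_apply, sub_eq_zero, Fin.ext_iff]
  · by_cases hf : ∀ k, ∃ j : Fin p, e k = 2 * ((j : ℕ) : ℤ)
    · choose f hf using hf
      refine absurd (funext fun k => ?_) h
      have hmono : StrictMono f := fun i j hij => by
        have := he hij
        rw [hf, hf] at this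
        exact Fin.lt_def.2 (by omega)
      have hsurj : Function.Surjective f := Finite.surjective_of_injective hmono.injective
      have : f = id := (hmono.range_inj strictMono_id).1 (by simp [hsurj.range_eq])
      rw [hf, this, id]
    · push Not at hf
      obtain ⟨k, hk⟩ := hf
      refine Matrix.det_eq_zero_of_row_eq_zero k fun j => ?_
      simp [walkCount, sub_eq_zero, hk j]

theorem det_walkCount_succ {p : ℕ} (n : ℕ) (e : Fin p → ℤ) :
    (Matrix.of fun k j : Fin p => walkCount (n + 1) (e k - 2 * ((j : ℕ) : ℤ))).det =
      ∑ s ∈ Fintype.piFinset fun _ : Fin p => ({1, -1} : Finset ℤ),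
        (Matrix.of fun k j : Fin p => walkCount n ((e - s) k - 2 * ((j : ℕ) : ℤ))).det := by
  have h := (Matrix.detRowAlternating (n := Fin p) (R := ℤ)).toMultilinearMap.map_sum_finset
    (fun k s j => walkCount n (e k - s - 2 * ((j : ℕ) : ℤ))) fun _ => ({1, -1} : Finset ℤ)
  refine Eq.trans ?_ h
  change Matrix.det _ = Matrix.det _
  congr 1
  ext k j
  simp only [Matrix.of_apply, walkCount, Finset.sum_apply]
  refine Finset.sum_congr rfl fun s _ => ?_
  congr 1
  ring

theorem det_walkCount_of_not_strictMono {p n : ℕ} {e : Fin p → ℤ} (he : Monotone e)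
    (hs : ¬ StrictMono e) :
    (Matrix.of fun k j : Fin p => walkCount n (e k - 2 * ((j : ℕ) : ℤ))).det = 0 := by
  have hinj : ¬ Function.Injective e := fun h => hs (he.strictMono_of_injective h)
  simp only [Function.Injective, not_forall] at hinj
  obtain ⟨i, j, hij, hne⟩ := hinj
  exact Matrix.det_zero_of_row_eq hne (by ext; simp [hij])

/-- The Lindström–Gessel–Viennot formula for vicious walkers starting at `0, 2, …, 2(p-1)`. -/
theorem card_viciousFinset {p n : ℕ} {e : Fin p → ℤ} (he : Monotone e)
    (hpar : ∀ k, Even (e k - n)) :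
    ((viciousFinset p n e).card : ℤ) =
      (Matrix.of fun k j : Fin p => walkCount n (e k - 2 * ((j : ℕ) : ℤ))).det := by
  induction n generalizing e with
  | zero =>
    by_cases hs : StrictMono e
    · rw [det_walkCount_zero hs, viciousFinset]
      split_ifs <;> simp
    · rw [viciousFinset_eq_empty hs, det_walkCount_of_not_strictMono he hs]
      simp
  | succ n ih =>
    by_cases hs : StrictMono e
    · rw [det_walkCount_succ, card_viciousFinset_succ hs, Nat.cast_sum]
      refine Finset.sum_congr rfl fun s hs' => ?_
      simp only [Fintype.mem_piFinset, Finset.mem_insert, Finset.mem_singleton] at hs'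
      refine ih (fun i j hij => ?_) fun k => ?_
      · rcases hij.lt_or_eq with hij | rfl
        · obtain ⟨a, ha⟩ := hpar i
          obtain ⟨b, hb⟩ := hpar j
          have := hs hij
          have := hs' i
          have := hs' j
          simp only [Pi.sub_apply]
          omega
        · rfl
      · obtain ⟨a, ha⟩ := hpar k
        push_cast at ha
        rw [Pi.sub_apply]
        rcases hs' k with h | h
        · exact ⟨a, by omega⟩
        · exact ⟨a + 1, by omega⟩
    · rw [viciousFinset_eq_empty hs, det_walkCount_of_not_strictMono he hs]
      simp

/-- The number of vicious `3`-watermelons of length `n` whose walks make `k` up-steps each. -/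
def viciousThreeCount (n k : ℕ) : ℚ :=
  2 * ((n + 2).choose k * (n + 2).choose (k + 1) * (n + 2).choose (k + 2)) /
    ((n + 1) * (n + 2) ^ 2)

theorem viciousThreeCount_eq_zero {n k : ℕ} (h : n < k) : viciousThreeCount n k = 0 := by
  simp [viciousThreeCount, Nat.choose_eq_zero_of_lt (show n + 2 < k + 2 by omega)]

theorem viciousThreeCount_succ_right (n k : ℕ) :
    viciousThreeCount n (k + 1) * ((k + 1) * (k + 2) * (k + 3)) =
      viciousThreeCount n k * ((n - k) * (n + 1 - k) * (n + 2 - k)) := by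
  have h₀ := choose_succ_mul_cast (n + 2) k
  have h₁ := choose_succ_mul_cast (n + 2) (k + 1)
  have h₂ := choose_succ_mul_cast (n + 2) (k + 2)
  push_cast at h₀ h₁ h₂
  rw [← eq_div_iff (by positivity)] at h₀ h₁ h₂
  simp only [viciousThreeCount, add_assoc, Nat.reduceAdd] at *
  rw [h₂, h₁, h₀]
  field_simp
  ring

theorem viciousThreeCount_succ_left (n k : ℕ) :
    viciousThreeCount (n + 1) k * ((n + 1 - k) * (n + 2 - k) * (n + 3 - k)) =
      viciousThreeCount n k * ((n + 1) * (n + 2) * (n + 3)) := by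
  have h₀ := succ_choose_mul_cast (n + 2) k
  have h₁ := succ_choose_mul_cast (n + 2) (k + 1)
  have h₂ := succ_choose_mul_cast (n + 2) (k + 2)
  push_cast at h₀ h₁ h₂
  have h : ((n + 2 + 1).choose k * (n + 2 + 1).choose (k + 1) * (n + 2 + 1).choose (k + 2) : ℚ) *
      ((n + 1 - k) * (n + 2 - k) * (n + 3 - k)) =
      (n + 2).choose k * (n + 2).choose (k + 1) * (n + 2).choose (k + 2) * (n + 3) ^ 3 := by
    calc _ = (((n + 2 + 1).choose k : ℚ) * (n + 2 + 1 - k)) *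
          ((n + 2 + 1).choose (k + 1) * (n + 2 + 1 - (k + 1))) *
          ((n + 2 + 1).choose (k + 2) * (n + 2 + 1 - (k + 2))) := by ring
      _ = _ := by rw [h₀, h₁, h₂]; ring
  simp only [viciousThreeCount]
  rw [show n + 1 + 2 = n + 2 + 1 by ring]
  push_cast
  rw [div_mul_eq_mul_div, div_mul_eq_mul_div, mul_assoc 2, h]
  field_simp
  ring

theorem viciousThreeCount_eq_choose {n k : ℕ} (h : k ≤ n) :
    viciousThreeCount n k = (n.choose k : ℚ) ^ 3 * (2 * (n + 1) ^ 2 * (n + 2)) /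
      ((k + 1) ^ 2 * (k + 2) * (n + 1 - k) ^ 2 * (n + 2 - k)) := by
  have hk : (k : ℚ) ≤ n := by exact_mod_cast h
  have hd₁ : (n + 1 - k : ℚ) ≠ 0 := by linarith
  have hd₂ : (n + 2 - k : ℚ) ≠ 0 := by linarith
  have h₀ := succ_choose_mul_cast n k
  have h₁ := succ_choose_mul_cast (n + 1) k
  have h₂ := choose_succ_mul_cast (n + 2) k
  have h₃ := choose_succ_mul_cast (n + 2) (k + 1)
  rw [← eq_div_iff hd₁] at h₀
  push_cast at h₁ h₂ h₃
  rw [show (n + 1 + 1 - k : ℚ) = n + 2 - k by ring, ← eq_div_iff hd₂] at h₁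
  rw [← eq_div_iff (by positivity)] at h₂ h₃
  simp only [viciousThreeCount, add_assoc, Nat.reduceAdd] at *
  rw [h₃, h₂, h₁, h₀]
  field_simp
  ring

theorem card_viciousFinset_three {n k : ℕ} (h : k ≤ n) :
    ((viciousFinset 3 n fun i => 2 * k - n + 2 * ((i : ℕ) : ℤ)).card : ℚ) =
      viciousThreeCount n k := by
  have hk : (k : ℚ) ≤ n := by exact_mod_cast h
  have hd₁ : (n + 1 - k : ℚ) ≠ 0 := by linarith
  have hd₂ : (n + 2 - k : ℚ) ≠ 0 := by linarith
  have hcard := card_viciousFinset (p := 3) (n := n)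
    (e := fun i => 2 * k - n + 2 * ((i : ℕ) : ℤ))
    (fun i j hij => by have : (i : ℕ) ≤ j := hij; dsimp only; omega)
    (fun i => ⟨k - n + ((i : ℕ) : ℤ), by ring⟩)
  have h₀ : (walkCount n (2 * k - n) : ℚ) = n.choose k := by
    exact_mod_cast walkCount_eq_choose n k
  set d : ℤ := 2 * k - n with hd
  have hdq : (d : ℚ) = 2 * k - n := by rw [hd]; push_cast; ring
  have hM : (Matrix.of fun i j : Fin 3 =>
        walkCount n (d + 2 * ((i : ℕ) : ℤ) - 2 * ((j : ℕ) : ℤ))) =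
      !![walkCount n d, walkCount n (d - 2), walkCount n (d - 4);
        walkCount n (d + 2), walkCount n d, walkCount n (d - 2);
        walkCount n (d + 4), walkCount n (d + 2), walkCount n d] := by
    ext i j
    fin_cases i <;> fin_cases j <;> simp <;> congr 1 <;> ring
  rw [hM, Matrix.det_fin_three] at hcard
  have hq := congrArg (Int.cast : ℤ → ℚ) hcard
  rw [Int.cast_natCast] at hq
  have r₁ := congrArg (Int.cast : ℤ → ℚ) (walkCount_add_two n d)
  have r₂ := congrArg (Int.cast : ℤ → ℚ) (walkCount_add_two n (d + 2))
  have r₃ := congrArg (Int.cast : ℤ → ℚ) (walkCount_add_two n (d - 2))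
  have r₄ := congrArg (Int.cast : ℤ → ℚ) (walkCount_add_two n (d - 4))
  rw [show d + 2 + 2 = d + 4 by ring] at r₂
  rw [sub_add_cancel] at r₃
  rw [show d - 4 + 2 = d - 2 by ring] at r₄
  push_cast at r₁ r₂ r₃ r₄
  rw [hdq] at r₁ r₂ r₃ r₄
  rw [h₀] at r₁ r₃
  have e₁ : (walkCount n (d + 2) : ℚ) = n.choose k * (n - k) / (k + 1) := by
    rw [eq_div_iff (by positivity)]; linear_combination r₁ / 2
  have e₂ : (walkCount n (d + 4) : ℚ) =
      n.choose k * (n - k) * (n - k - 1) / ((k + 1) * (k + 2)) := by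
    rw [e₁] at r₂
    field_simp at r₂ ⊢
    linear_combination r₂ / 2
  have e₃ : (walkCount n (d - 2) : ℚ) = n.choose k * k / (n + 1 - k) := by
    rw [eq_div_iff hd₁]; linear_combination - r₃ / 2
  have e₄ : (walkCount n (d - 4) : ℚ) =
      n.choose k * k * (k - 1) / ((n + 1 - k) * (n + 2 - k)) := by
    rw [e₃] at r₄
    field_simp at r₄ ⊢
    linear_combination - r₄ / 2
  rw [hq, viciousThreeCount_eq_choose h]
  simp only [Matrix.of_apply, Matrix.cons_val', Matrix.cons_val, Matrix.cons_val_zero,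
    Matrix.cons_val_one]
  push_cast
  rw [h₀, e₁, e₂, e₃, e₄]
  field_simp
  ring

theorem IsWalkTo.exists_upSteps {n : ℕ} {y : ℕ → ℤ} (h : IsWalkTo n y) {t : ℕ} (ht : t ≤ n) :
    ∃ k ≤ t, y t = y 0 + 2 * k - t := by
  induction t with
  | zero => exact ⟨0, le_rfl, by simp⟩
  | succ t ih =>
    obtain ⟨k, hk, hy⟩ := ih (Nat.le_of_succ_le ht)
    rcases h.1 t ht with h | h
    · exact ⟨k + 1, by omega, by push_cast; omega⟩
    · exact ⟨k, by omega, by push_cast; omega⟩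

theorem card_vicious_three (n : ℕ) :
    (Nat.card {y : Fin 3 → ℕ → ℤ // Vicious 3 n y} : ℚ) =
      ∑ k ∈ Finset.range (n + 1), viciousThreeCount n k := by
  classical
  have hset : {y : Fin 3 → ℕ → ℤ | Vicious 3 n y} =
      (Finset.range (n + 1)).biUnion fun k =>
        viciousFinset 3 n fun i => 2 * k - n + 2 * ((i : ℕ) : ℤ) := by
    ext y
    simp only [Set.mem_ofPred_eq, Finset.coe_biUnion, Set.mem_iUnion, SetLike.mem_coe,
      mem_viciousFinset, Finset.mem_range, Nat.lt_succ_iff]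
    constructor
    · rintro ⟨hw, h0, ⟨c, hc⟩, ho⟩
      obtain ⟨k, hk, hy⟩ := (hw 0).exists_upSteps le_rfl
      have h0' := h0 0
      have hc' := hc 0
      refine ⟨k, hk, hw, h0, fun i => ?_, ho⟩
      rw [hc]
      simp only [Fin.val_zero, Nat.cast_zero, mul_zero, add_zero] at h0' hc'
      dsimp only
      omega
    · rintro ⟨k, -, hw, h0, hn, ho⟩
      exact ⟨hw, h0, ⟨_, hn⟩, ho⟩
  change (Nat.card {y : Fin 3 → ℕ → ℤ | Vicious 3 n y} : ℚ) = _
  rw [hset, Nat.card_coe_set_eq, Set.ncard_coe_finset, Finset.card_biUnion, Nat.cast_sum]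
  · exact Finset.sum_congr rfl fun k hk =>
      card_viciousFinset_three (Nat.lt_succ_iff.1 (Finset.mem_range.1 hk))
  · intro k _ k' _ hne
    rw [Function.onFun, Finset.disjoint_left]
    intro y hy hy'
    have h := (mem_viciousFinset.1 hy).2.2.1 0
    rw [(mem_viciousFinset.1 hy').2.2.1 0] at h
    simp only [Fin.val_zero] at h
    omega

/-- The telescoping certificate of the recurrence for `viciousThreeCount`. -/
def viciousThreeCertificate (n k : ℕ) : ℚ :=
  viciousThreeCount (n + 2) k * (k * (k + 1) * (k + 2)) *
    (-(402 + 401 * n + 131 * n ^ 2 + 14 * n ^ 3) + (248 + 165 * n + 27 * n ^ 2) * k -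
      (54 + 18 * n) * k ^ 2 + 4 * k ^ 3) / ((n + 2) * (n + 3) ^ 2 * (n + 4))

theorem viciousThreeCertificate_succ_sub (n k : ℕ) :
    viciousThreeCertificate n (k + 1) - viciousThreeCertificate n k =
      (n + 5) * (n + 6) * viciousThreeCount (n + 2) k -
        (7 * (n + 2) ^ 2 + 21 * (n + 2) + 12) * viciousThreeCount (n + 1) k -
        8 * (n + 2) * (n + 1) * viciousThreeCount n k := by
  have h₀ := viciousThreeCount_succ_left n k
  have h₁ := viciousThreeCount_succ_left (n + 1) k
  have h₂ := viciousThreeCount_succ_right (n + 2) k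
  rw [eq_comm, ← eq_div_iff (by positivity)] at h₀ h₁
  push_cast at h₁ h₂
  have h₃ : viciousThreeCertificate n (k + 1) =
      viciousThreeCount (n + 2) k * ((n + 2 - k) * (n + 2 + 1 - k) * (n + 2 + 2 - k)) *
    (-(402 + 401 * n + 131 * n ^ 2 + 14 * n ^ 3) + (248 + 165 * n + 27 * n ^ 2) * (k + 1) -
      (54 + 18 * n) * (k + 1) ^ 2 + 4 * (k + 1) ^ 3) / ((n + 2) * (n + 3) ^ 2 * (n + 4)) := by
    rw [← h₂, viciousThreeCertificate]
    push_cast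
    ring
  rw [h₃, viciousThreeCertificate, h₀, h₁]
  field_simp
  ring

theorem sum_viciousThreeCount_recurrence (n : ℕ) :
    ((n + 5) * (n + 6) : ℚ) * ∑ k ∈ Finset.range (n + 3), viciousThreeCount (n + 2) k =
      (7 * (n + 2) ^ 2 + 21 * (n + 2) + 12) *
        ∑ k ∈ Finset.range (n + 2), viciousThreeCount (n + 1) k +
      8 * (n + 2) * (n + 1) * ∑ k ∈ Finset.range (n + 1), viciousThreeCount n k := by
  have h := Finset.sum_range_sub (viciousThreeCertificate n) (n + 3)
  have hl : viciousThreeCertificate n (n + 3) = 0 := by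
    simp [viciousThreeCertificate, viciousThreeCount_eq_zero (show n + 2 < n + 3 by omega)]
  have hr : viciousThreeCertificate n 0 = 0 := by simp [viciousThreeCertificate]
  simp only [viciousThreeCertificate_succ_sub, hl, hr, Finset.sum_sub_distrib,
    ← Finset.mul_sum] at h
  have h₀ : ∑ k ∈ Finset.range (n + 3), viciousThreeCount n k =
      ∑ k ∈ Finset.range (n + 1), viciousThreeCount n k := by
    rw [Finset.sum_range_succ, Finset.sum_range_succ,
      viciousThreeCount_eq_zero (by omega), viciousThreeCount_eq_zero (by omega)]
    ring
  have h₁ : ∑ k ∈ Finset.range (n + 3), viciousThreeCount (n + 1) k =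
      ∑ k ∈ Finset.range (n + 2), viciousThreeCount (n + 1) k := by
    rw [Finset.sum_range_succ, viciousThreeCount_eq_zero (by omega), add_zero]
  rw [h₀, h₁] at h
  linear_combination h

/-- A recurrence with polynomial coefficients, translated into a differential equation for the
generating function. -/
theorem ode_of_recurrence {v : ℕ → ℚ} (h0 : v 0 = 1) (h1 : v 1 = 2)
    (h : ∀ n : ℕ, ((n + 5) * (n + 6) : ℚ) * v (n + 2) =
      (7 * (n + 2) ^ 2 + 21 * (n + 2) + 12) * v (n + 1) + 8 * (n + 2) * (n + 1) * v n) :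
    X ^ 2 * (1 + X) * (1 - 8 * X) * (derivative ℚ (derivative ℚ (mk v))) +
      X * (8 - 42 * X - 32 * X ^ 2) * (derivative ℚ (mk v)) +
      (12 - 40 * X - 16 * X ^ 2) * mk v = 12 := by
  have hB (n : ℕ) : coeff n (X * derivative ℚ (mk v)) = n * v n := by
    cases n with
    | zero => simp
    | succ n => rw [coeff_succ_X_mul, coeff_derivative, coeff_mk]; push_cast; ring
  have hA (n : ℕ) : coeff n (X * (X * derivative ℚ (derivative ℚ (mk v)))) =
      n * (n - 1) * v n := by
    cases n with
    | zero => simp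
    | succ n =>
      rw [coeff_succ_X_mul]
      cases n with
      | zero => simp
      | succ n =>
        rw [coeff_succ_X_mul, coeff_derivative, coeff_derivative, coeff_mk]; push_cast; ring
  set A := X * (X * derivative ℚ (derivative ℚ (mk v))) with hAdef
  set B := X * derivative ℚ (mk v) with hBdef
  have hC : (12 : ℚ⟦X⟧) = C 12 := (map_ofNat C 12).symm
  have key : X ^ 2 * (1 + X) * (1 - 8 * X) * (derivative ℚ (derivative ℚ (mk v))) +
      X * (8 - 42 * X - 32 * X ^ 2) * (derivative ℚ (mk v)) +
      (12 - 40 * X - 16 * X ^ 2) * mk v =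
      (A + (8 : ℚ) • B + (12 : ℚ) • mk v) -
        X * ((7 : ℚ) • A + (42 : ℚ) • B + (40 : ℚ) • mk v) -
        X * (X * ((8 : ℚ) • A + (32 : ℚ) • B + (16 : ℚ) • mk v)) := by
    simp only [smul_eq_C_mul, map_ofNat, hAdef, hBdef]
    ring
  have hA0 : constantCoeff A = 0 := by simp [hAdef]
  have hB0 : constantCoeff B = 0 := by simp [hBdef]
  rw [key, hC]
  ext n
  rcases n with _ | _ | n
  · simp [hA0, hB0, h0]
  · rw [coeff_C]
    simp [hA, hB, hA0, hB0, h0, h1, coeff_succ_X_mul]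
    norm_num
  · rw [coeff_C]
    simp [hA, hB, coeff_succ_X_mul]
    linear_combination h n

/-- The vicious 3-watermelon generating function `V₃(x)` satisfies
`x²(1+x)(1-8x) V₃'' + x(8-42x-32x²) V₃' + (12-40x-16x²) V₃ = 12`. -/
theorem vicious3_ode :
    let V : ℚ⟦X⟧ := PowerSeries.mk fun n =>
      (Nat.card {y : Fin 3 → ℕ → ℤ // Vicious 3 n y} : ℚ)
    X ^ 2 * (1 + X) * (1 - 8 * X) * (derivative ℚ (derivative ℚ V)) +
      X * (8 - 42 * X - 32 * X ^ 2) * (derivative ℚ V) +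
      (12 - 40 * X - 16 * X ^ 2) * V = 12 := by
  intro V
  refine ode_of_recurrence ?_ ?_ fun n => ?_
  · simp [card_vicious_three, viciousThreeCount]
    norm_num
  · simp [card_vicious_three, viciousThreeCount, Finset.sum_range_succ]
    norm_num [Nat.choose]
  · simpa only [card_vicious_three] using sum_viciousThreeCount_recurrence n
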